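/- Let A, B ∈ ℂ^{n×n} with A Hermitian and B Hermitian positive definite, let m be an integer with 1 ≤ m ≤ n, and for any V ∈ ℂ^{n×m} with orthonormal columns define ρ(V) = Tr(V^H A V) / Tr(V^H B V). Let (V^{(n)})_{n≥0} be a sequence of matrices in ℂ^{n×m} each with orthonormal columns such that for every n ≥ 1, V^{(n)} maximizes Tr(V^H (A − ρ(V^{(n−1)}) B) V) over all V ∈ ℂ^{n×m} with orthonormal columns. Then the sequence of trace quotients ρ_n := ρ(V^{(n−1)}) is monotonically nondecreasing: ρ_{n+1} ≥ ρ_n for all n ≥ 1. -/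

import Mathlib

/-!
Write `a(V) = Tr(Vᴴ A V)`, `b(V) = Tr(Vᴴ B V)` and `ρ = a(V k) / b(V k)`. The objective
`Tr(Vᴴ (A - ρ B) V) = a(V) - ρ b(V)` vanishes at `V k`, so its maximizer `V (k+1)` satisfies
`a(V (k+1)) - ρ b(V (k+1)) ≥ 0`. Dividing by `b(V (k+1)) > 0`, which holds because `B` is
positive definite and `V (k+1)` is injective with at least one column, gives the claim.
-/

open Matrix ComplexOrder

/-- The trace quotient `Tr(Vᴴ A V) / Tr(Vᴴ B V)`. -/
noncomputable def traceQuotient {n m : ℕ} (A B : Matrix (Fin n) (Fin n) ℂ)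
    (V : Matrix (Fin n) (Fin m) ℂ) : ℝ :=
  ((Vᴴ * A * V).trace).re / ((Vᴴ * B * V).trace).re

lemma re_trace_pos_of_posDef {n m : ℕ} (hm : 1 ≤ m) {B : Matrix (Fin n) (Fin n) ℂ}
    (hB : B.PosDef) {V : Matrix (Fin n) (Fin m) ℂ} (hV : Vᴴ * V = 1) :
    0 < ((Vᴴ * B * V).trace).re := by
  have : Nonempty (Fin m) := ⟨⟨0, hm⟩⟩
  have hinj : Function.Injective V.mulVec := by
    intro x y hxy
    have h := congrArg (Vᴴ.mulVec) hxy
    simpa [Matrix.mulVec_mulVec, hV] using h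
  have h : (Vᴴ * B * V).PosDef := hB.conjTranspose_mul_mul_same hinj
  exact (Complex.pos_iff.mp h.trace_pos).1

lemma re_trace_sub_smul {n m : ℕ} (A B : Matrix (Fin n) (Fin n) ℂ)
    (V : Matrix (Fin n) (Fin m) ℂ) (r : ℝ) :
    ((Vᴴ * (A - (r : ℂ) • B) * V).trace).re =
      ((Vᴴ * A * V).trace).re - r * ((Vᴴ * B * V).trace).re := by
  simp [Matrix.mul_sub, Matrix.sub_mul, Matrix.trace_sub, Matrix.trace_smul]

/-- Theorem 2: with `A` Hermitian and `B` positive definite, the iterative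
algorithm which at each step replaces the current iterate `V⁽ᵏ⁾` by a maximizer
`V⁽ᵏ⁺¹⁾` of the trace-difference objective `Tr(Vᴴ (A − ρ(V⁽ᵏ⁾) B) V)` over
matrices with orthonormal columns produces a monotonically nondecreasing
sequence of trace quotients `ρ(V⁽ᵏ⁾)`. -/
theorem stmt9 (n m : ℕ) (hm : 1 ≤ m) (hmn : m ≤ n)
    (A B : Matrix (Fin n) (Fin n) ℂ) (hA : A.IsHermitian) (hB : B.PosDef)
    (V : ℕ → Matrix (Fin n) (Fin m) ℂ) (hV : ∀ k : ℕ, (V k)ᴴ * V k = 1)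
    (hmax : ∀ k : ℕ, ∀ W : Matrix (Fin n) (Fin m) ℂ, Wᴴ * W = 1 →
        ((Wᴴ * (A - (traceQuotient A B (V k) : ℂ) • B) * W).trace).re ≤
          (((V (k+1))ᴴ * (A - (traceQuotient A B (V k) : ℂ) • B) * (V (k+1))).trace).re) :
    ∀ k : ℕ, traceQuotient A B (V k) ≤ traceQuotient A B (V (k+1)) := by
  intro k
  have h := hmax k (V k) (hV k)
  have h0 := re_trace_pos_of_posDef hm hB (hV k)
  have h1 := re_trace_pos_of_posDef hm hB (hV (k+1))
  rw [re_trace_sub_smul, re_trace_sub_smul] at h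
  -- The objective vanishes at the current iterate.
  have hk : traceQuotient A B (V k) * (((V k)ᴴ * B * V k).trace).re =
      (((V k)ᴴ * A * V k).trace).re := div_mul_cancel₀ _ h0.ne'
  have hle : traceQuotient A B (V k) * (((V (k+1))ᴴ * B * V (k+1)).trace).re ≤
      (((V (k+1))ᴴ * A * V (k+1)).trace).re := by linarith
  exact (le_div_iff₀ h1).mpr hle
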